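/- Let M be a Malcev algebra over F lying in the variety H, containing L = sl2(F), and such that mL ≠ 0 for every nonzero m ∈ M. Then M = N_M ⊕ J_M as F-vector spaces, and this decomposition is a Z/2-grading of the algebra M: N_M·N_M ⊆ N_M (even part), N_M·J_M + J_M·N_M ⊆ J_M, and J_M·J_M ⊆ N_M (odd part J_M). -/

import Mathlib

section
variable {K : Type*} [Field K] {M : Type*} [AddCommGroup M] [Module K M]

/-- the Jacobian `J(x,y,z) = (xy)z + (yz)x + (zx)y` -/
def mjac (μ : M →ₗ[K] M →ₗ[K] M) (x y z : M) : M :=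
  μ (μ x y) z + μ (μ y z) x + μ (μ z x) y

/-- `{x,y,z} = (xy)z − (xz)y + 2·x(yz)` -/
def mbr (μ : M →ₗ[K] M →ₗ[K] M) (x y z : M) : M :=
  μ (μ x y) z - μ (μ x z) y + (2 : K) • μ x (μ y z)

/-- `h(y,z,t,x,u) = {yz,t,u}x + {yz,t,x}u + {yx,z,u}t + {yu,z,x}t` -/
def mh (μ : M →ₗ[K] M →ₗ[K] M) (y z t x u : M) : M :=
  μ (mbr μ (μ y z) t u) x + μ (mbr μ (μ y z) t x) u +
    μ (mbr μ (μ y x) z u) t + μ (mbr μ (μ y u) z x) t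

/-- A Malcev algebra structure: anticommutative (`x·x = 0`) together with the Malcev
identity `(xz)(yt) = ((xy)z)t + ((yz)t)x + ((zt)x)y + ((tx)y)z`. -/
def IsMalcev (μ : M →ₗ[K] M →ₗ[K] M) : Prop :=
  (∀ x, μ x x = 0) ∧
    ∀ x y z t, μ (μ x z) (μ y t) =
      μ (μ (μ x y) z) t + μ (μ (μ y z) t) x + μ (μ (μ z t) x) y + μ (μ (μ t x) y) z

/-- the variety 𝓗 : `h(y,z,t,x,u) = 0` identically -/
def InVarietyH (μ : M →ₗ[K] M →ₗ[K] M) : Prop := ∀ y z t x u, mh μ y z t x u = 0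

/-- `N_M = {m | J(m,a,b) = 0 ∀ a,b ∈ L}` -/
def NMset (μ : M →ₗ[K] M →ₗ[K] M) (L : Submodule K M) : Set M :=
  {m : M | ∀ a ∈ L, ∀ b ∈ L, mjac μ m a b = 0}

/-- `J_M = {m | {m,a,b} = 0 ∀ a,b ∈ L}` -/
def JMset (μ : M →ₗ[K] M →ₗ[K] M) (L : Submodule K M) : Set M :=
  {m : M | ∀ a ∈ L, ∀ b ∈ L, mbr μ m a b = 0}

/-- the centroid Γ(M): linear operators commuting with all multiplications -/
def centroid (μ : M →ₗ[K] M →ₗ[K] M) : Set (Module.End K M) :=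
  {α | ∀ x y : M, α (μ x y) = μ x (α y) ∧ α (μ x y) = μ (α x) y}

/-- `p(x,y,z,t) = −{zt,x,y} − {yt,z,x} + {xt,y,z}` -/
def pfun (μ : M →ₗ[K] M →ₗ[K] M) (x y z t : M) : M :=
  -(mbr μ (μ z t) x y) - mbr μ (μ y t) z x + mbr μ (μ x t) y z

/-- `U`: the span of the operators `α(y,a,b) : x ↦ p(x,y,a,b)` with `y ∈ M`, `a,b ∈ L` -/
def Uspan (μ : M →ₗ[K] M →ₗ[K] M) (L : Submodule K M) : Submodule K (Module.End K M) :=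
  Submodule.span K {φ : Module.End K M | ∃ y : M, ∃ a ∈ L, ∃ b ∈ L, ∀ x, φ x = pfun μ x y a b}

/-- `N_M = L·U`: the span of the elements `aα`, `a ∈ L`, `α ∈ U` -/
def NMspan (μ : M →ₗ[K] M →ₗ[K] M) (L : Submodule K M) : Submodule K M :=
  Submodule.span K {m : M | ∃ a ∈ L, ∃ φ ∈ Uspan μ L, m = φ a}

/-- the linear operator `m ↦ J(m,a,b)` -/
def jop (μ : M →ₗ[K] M →ₗ[K] M) (a b : M) : M →ₗ[K] M :=
  μ.flip b ∘ₗ μ.flip a + μ (μ a b) + μ.flip a ∘ₗ μ b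

/-- the linear operator `m ↦ {m,a,b}` -/
def bop (μ : M →ₗ[K] M →ₗ[K] M) (a b : M) : M →ₗ[K] M :=
  μ.flip b ∘ₗ μ.flip a - μ.flip a ∘ₗ μ.flip b + (2 : K) • μ.flip (μ a b)

/-- `N_M` as a submodule (intersection of the kernels of `m ↦ J(m,a,b)`, `a,b ∈ L`) -/
def NMker (μ : M →ₗ[K] M →ₗ[K] M) (L : Submodule K M) : Submodule K M :=
  ⨅ (a : M) (_ : a ∈ L) (b : M) (_ : b ∈ L), LinearMap.ker (jop μ a b)

/-- `J_M` as a submodule (intersection of the kernels of `m ↦ {m,a,b}`, `a,b ∈ L`) -/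
def JMker (μ : M →ₗ[K] M →ₗ[K] M) (L : Submodule K M) : Submodule K M :=
  ⨅ (a : M) (_ : a ∈ L) (b : M) (_ : b ∈ L), LinearMap.ker (bop μ a b)

/-- `Ann_M L` as a set -/
def AnnSet (μ : M →ₗ[K] M →ₗ[K] M) (L : Submodule K M) : Set M :=
  {m : M | ∀ a ∈ L, μ m a = 0}

/-- `Ann_M L` as a submodule -/
def Annker (μ : M →ₗ[K] M →ₗ[K] M) (L : Submodule K M) : Submodule K M :=
  ⨅ (a : M) (_ : a ∈ L), LinearMap.ker (μ.flip a)

/-- `V = {w ∈ J_M : wH = w, wF = 0}` as a set -/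
def Vset (μ : M →ₗ[K] M →ₗ[K] M) (L : Submodule K M) (Hm Fm : M) : Set M :=
  {w : M | w ∈ JMset μ L ∧ μ w Hm = w ∧ μ w Fm = 0}

/-- `V = {w ∈ J_M : wH = w, wF = 0}` as a submodule -/
def Vsub (μ : M →ₗ[K] M →ₗ[K] M) (L : Submodule K M) (Hm Fm : M) : Submodule K M :=
  JMker μ L ⊓ LinearMap.ker (μ.flip Hm - LinearMap.id) ⊓ LinearMap.ker (μ.flip Fm)

/-- Relations satisfied by the right multiplications by `E`, `H`, `F` on a Malcev algebra
containing `sl₂`; products are composed from right to left. -/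
structure MalcevSl2Relations {A : Type*} [Ring A] (e h f : A) : Prop where
  cube_e : e * e * e = 0
  cube_h : h * h * h = h
  eeh : 2 * e * e + e * e * h = h * e * e
  ehe : h * e * e = e * h * e + e * e
  hee : e * h * e = e * e + e * e * h
  eef : h * e + e * h + e * e * f = f * e * e
  efe : f * e * e = e * f * e + e + e * h
  fee : e + e * f * e = h * e + e * e * f
  ehh : e * h + e + h * e * h = h * h * e
  heh : h * e + e * h * h = h * e * h + e
  hhe : h * h * e = e * h + e * h * h + h * e
  ehf : h * h + h + e * f + h * e * f = f * h * e
  efh : f * e * h = h * f * e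
  hef : f * e + h * h + e * h * f = f * e * h + h

/-- The relations of `MalcevSl2Relations` together with their images under the symmetry
`(e, h, f) ↦ (f, -h, e)`, over a ring in which `3` can be cancelled and which has no nonzero
element annihilated by `e`, `h` and `f`. -/
structure MalcevSl2 {A : Type*} [Ring A] (e h f : A) : Prop where
  pos : MalcevSl2Relations e h f
  neg : MalcevSl2Relations f (-h) e
  cancel_three : ∀ a b : A, 3 * a = 3 * b → a = b
  faithful : ∀ a : A, e * a = 0 → h * a = 0 → f * a = 0 → a = 0

section Relations

variable {A : Type*} [Ring A] {e h f : A}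

theorem MalcevSl2.symm (S : MalcevSl2 e h f) : MalcevSl2 f (-h) e where
  pos := S.neg
  neg := by simpa using S.pos
  cancel_three := S.cancel_three
  faithful a hf hh he := S.faithful a he (by simpa using hh) hf

theorem MalcevSl2.e_h_e (S : MalcevSl2 e h f) :
    e * h * e = 0 := by
  refine S.cancel_three _ _ ?_
  linear_combination (norm := noncomm_ring)
    S.pos.eef * e + f * S.pos.cube_e - S.pos.ehe - e * S.pos.fee - S.pos.cube_e * f

theorem MalcevSl2.h_e_e (S : MalcevSl2 e h f) :
    h * e * e = e * e := by
  linear_combination (norm := noncomm_ring)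
    S.e_h_e + S.pos.ehe

theorem MalcevSl2.h_h_e (S : MalcevSl2 e h f) :
    3 * h * h * e = 2 * e * h + 2 * e + h * e := by
  linear_combination (norm := noncomm_ring)
    S.pos.cube_h * e + S.pos.heh * h - 2 * S.pos.ehh - e * S.pos.cube_h - h * S.pos.hhe

theorem MalcevSl2.h_e_h (S : MalcevSl2 e h f) :
    3 * h * e * h = h * e - e * h - e := by
  linear_combination (norm := noncomm_ring)
    3 * S.pos.ehh + S.h_h_e

theorem MalcevSl2.e_h_h (S : MalcevSl2 e h f) :
    3 * e * h * h = 2 * e - e * h - 2 * h * e := by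
  linear_combination (norm := noncomm_ring)
    3 * S.pos.heh + S.h_e_h

theorem MalcevSl2.f_e_e (S : MalcevSl2 e h f) :
    3 * f * e * e = 2 * e * h - e + h * e := by
  linear_combination (norm := noncomm_ring)
    3 * (S.pos.ehf * e) + 3 * (f * S.h_e_e) - 3 * (S.h_e_e * f) - 3 * S.pos.fee - 6 * S.pos.eef
      - 2 * S.h_h_e - 3 * (h * S.pos.fee)

theorem MalcevSl2.e_f_e (S : MalcevSl2 e h f) :
    3 * e * f * e = h * e - e * h - 4 * e := by
  linear_combination (norm := noncomm_ring)
    S.f_e_e - 3 * S.pos.efe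

theorem MalcevSl2.e_e_f (S : MalcevSl2 e h f) :
    3 * e * e * f = -(e * h) - e - 2 * h * e := by
  linear_combination (norm := noncomm_ring)
    3 * S.pos.eef + S.f_e_e

theorem MalcevSl2.e_mul_trivialProj (S : MalcevSl2 e h f) :
    e * (3 * h * f * e + 3 * h * h + 2 * h - 4 * e * f - 5 * f * e - 9) = 0 := by
  linear_combination (norm := noncomm_ring)
    3 * (S.pos.eeh * f) + 2 * S.e_h_h + 3 * (S.h_e_e * f) - 3 * (e * S.neg.ehf)
      - 2 * S.pos.fee - 3 * S.e_e_f

theorem MalcevSl2.h_mul_trivialProj (S : MalcevSl2 e h f) :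
    h * (3 * h * f * e + 3 * h * h + 2 * h - 4 * e * f - 5 * f * e - 9) = 0 := by
  linear_combination (norm := noncomm_ring)
    2 * (S.h_e_h * f) + S.neg.ehh * e + 9 * S.pos.cube_h - 4 * (h * S.neg.ehf)
      - S.symm.h_e_h * e - 2 * (h * S.pos.ehf) - 2 * (S.pos.ehh * f)

theorem MalcevSl2.f_mul_trivialProj (S : MalcevSl2 e h f) :
    f * (3 * h * f * e + 3 * h * h + 2 * h - 4 * e * f - 5 * f * e - 9) = 0 := by
  linear_combination (norm := noncomm_ring)
    S.symm.e_h_h - 3 * (S.symm.e_h_e * e) - 4 * S.neg.fee - 3 * S.symm.e_e_f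

theorem MalcevSl2.trivialProj (S : MalcevSl2 e h f) :
    3 * h * f * e + 3 * h * h + 2 * h - 4 * e * f - 5 * f * e - 9 = 0 :=
  S.faithful _ S.e_mul_trivialProj S.h_mul_trivialProj S.f_mul_trivialProj

theorem MalcevSl2.jacF_mul_h (S : MalcevSl2 e h f) :
    (h * f - f * h + f) * h = -(h * f - f * h + f) := by
  linear_combination (norm := noncomm_ring)
    -S.neg.heh

theorem MalcevSl2.jacF_mul_f (S : MalcevSl2 e h f) :
    (h * f - f * h + f) * f = 0 := by
  linear_combination (norm := noncomm_ring)
    -S.neg.ehe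

theorem MalcevSl2.h_mul_jacF (S : MalcevSl2 e h f) :
    h * (h * f - f * h + f) = (h * f - f * h + f) := by
  linear_combination (norm := noncomm_ring)
    -S.neg.ehh

theorem MalcevSl2.f_mul_jacF (S : MalcevSl2 e h f) :
    f * (h * f - f * h + f) = 0 := by
  linear_combination (norm := noncomm_ring)
    -S.neg.hee

theorem MalcevSl2.jacF_mul_e_e (S : MalcevSl2 e h f) :
    (h * f - f * h + f) * e * e = 0 := by
  linear_combination (norm := noncomm_ring)
    (-1) * (f * S.pos.ehe) - S.pos.efh * e

theorem MalcevSl2.jacF_mul_brE (S : MalcevSl2 e h f) :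
    (h * f - f * h + f) * (h * e - e * h + 2 * e) = 0 := by
  linear_combination (norm := noncomm_ring)
    S.pos.efh * h - S.neg.heh * e - S.pos.efh - f * S.pos.heh

theorem MalcevSl2.jacF_mul_brH (S : MalcevSl2 e h f) :
    (h * f - f * h + f) * (f * e - e * f + 2 * h) = 0 := by
  linear_combination (norm := noncomm_ring)
    S.neg.ehf * f + 2 * S.neg.efe - e * S.jacF_mul_f - S.neg.hef * f - 2 * S.neg.heh - S.neg.ehe * e

theorem MalcevSl2.two_jacH (S : MalcevSl2 e h f) :
    2 * (f * e - e * f - h) = (h * f - f * h + f) * e - e * (h * f - f * h + f) := by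
  linear_combination (norm := noncomm_ring)
    S.neg.ehf - S.neg.hef

theorem MalcevSl2.two_jacE (S : MalcevSl2 e h f) :
    2 * (h * e - e * h - e) = e * (h * f - f * h + f) * e := by
  linear_combination (norm := noncomm_ring)
    2 * S.pos.efe - S.two_jacH * e - S.jacF_mul_e_e

theorem MalcevSl2.jacF_mul_e (S : MalcevSl2 e h f) :
    (h * f - f * h + f) * e = (f * e - e * f - h) + h * (f * e - e * f - h) := by
  linear_combination (norm := noncomm_ring)
    S.pos.ehf

theorem MalcevSl2.e_e_mul_jacF (S : MalcevSl2 e h f) :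
    e * e * (h * f - f * h + f) = 0 := by
  linear_combination (norm := noncomm_ring)
    e * S.neg.efh - S.pos.hee * f

theorem MalcevSl2.e_e_mul_jacH (S : MalcevSl2 e h f) :
    e * e * (f * e - e * f - h) = 0 := by
  linear_combination (norm := noncomm_ring)
    e * S.pos.fee + S.pos.hee

theorem MalcevSl2.e_e_f_mul_jacF_aux (S : MalcevSl2 e h f) :
    (-(e * h) - e - 2 * h * e) * (h * f - f * h + f) = 0 := by
  linear_combination (norm := noncomm_ring)
    e * S.neg.ehh - 2 * S.neg.efh - 2 * (h * S.neg.efh) - 2 * (S.pos.ehh * f)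

theorem MalcevSl2.e_e_f_mul_jacH_aux (S : MalcevSl2 e h f) :
    (-(e * h) - e - 2 * h * e) * (f * e - e * f - h) = 0 := by
  linear_combination (norm := noncomm_ring)
    e * S.pos.ehf + 2 * S.pos.ehh + S.two_jacE - 2 * (h * S.pos.fee)

theorem MalcevSl2.e_e_f_mul_jacF (S : MalcevSl2 e h f) :
    e * e * f * (h * f - f * h + f) = 0 := by
  refine S.cancel_three _ _ ?_
  linear_combination (norm := noncomm_ring)
    S.e_e_f_mul_jacF_aux + S.e_e_f * (h * f - f * h + f)

theorem MalcevSl2.e_e_f_mul_jacH (S : MalcevSl2 e h f) :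
    e * e * f * (f * e - e * f - h) = 0 := by
  refine S.cancel_three _ _ ?_
  linear_combination (norm := noncomm_ring)
    S.e_e_f_mul_jacH_aux + S.e_e_f * (f * e - e * f - h)

theorem MalcevSl2.brE (S : MalcevSl2 e h f) :
    h * e - e * h + 2 * e = -(3 * e * e * f) - 3 * f * e * e := by
  linear_combination (norm := noncomm_ring) S.f_e_e + S.e_e_f

theorem MalcevSl2.brH (S : MalcevSl2 e h f) :
    f * e - e * f + 2 * h = 3 * e * e * f * f - 3 * f * f * e * e := by
  linear_combination (norm := noncomm_ring)
    2 * (f * S.brE) - 2 * (f * S.e_e_f) + 3 * (f * S.pos.eef) + S.pos.ehf - S.f_e_e * f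
      - S.pos.hef - S.e_e_f * f

theorem MalcevSl2.brF (S : MalcevSl2 e h f) :
    h * f - f * h - 2 * f = -(3 * f * e * e * f * f) - 3 * f * f * e * e * f := by
  linear_combination (norm := noncomm_ring)
    9 * (S.symm.e_h_e * e) + f * S.trivialProj + 2 * S.symm.e_f_e + 4 * (S.f_mul_jacF * e)
      - f * S.pos.efh - f * S.neg.ehf - 2 * (f * S.pos.ehf) - S.neg.fee
      + f * S.e_e_f * f + f * f * S.e_e_f

theorem MalcevSl2.e_e_h (S : MalcevSl2 e h f) : e * e * h = -(e * e) := by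
  linear_combination (norm := noncomm_ring) S.e_h_e - S.pos.hee

theorem MalcevSl2.e_e_f_e (S : MalcevSl2 e h f) : e * e * f * e = -(e * e) := by
  linear_combination (norm := noncomm_ring)
    S.e_e_mul_jacH + S.pos.cube_e * f + S.e_e_h

theorem MalcevSl2.e_e_f_h (S : MalcevSl2 e h f) : e * e * f * h = 0 := by
  linear_combination (norm := noncomm_ring) S.e_e_h * f - S.e_e_mul_jacF

theorem MalcevSl2.e_e_f_f_e (S : MalcevSl2 e h f) : e * e * f * f * e = -(e * e * f) := by
  linear_combination (norm := noncomm_ring)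
    S.e_e_f_mul_jacH + S.e_e_f_e * f + S.e_e_f_h

theorem MalcevSl2.e_e_f_f_h (S : MalcevSl2 e h f) : e * e * f * f * h = e * e * f * f := by
  linear_combination (norm := noncomm_ring) S.e_e_f_h * f - S.e_e_f_mul_jacF

theorem MalcevSl2.jacF_mul_e_h (S : MalcevSl2 e h f) :
    (h * f - f * h + f) * e * h = (h * f - f * h + f) * e := by
  linear_combination (norm := noncomm_ring) S.jacF_mul_h * e - S.jacF_mul_brE

theorem MalcevSl2.jacF_mul_e_f (S : MalcevSl2 e h f) :
    (h * f - f * h + f) * e * f = -(2 * (h * f - f * h + f)) := by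
  linear_combination (norm := noncomm_ring)
    S.jacF_mul_f * e - S.jacF_mul_brH + 2 * S.jacF_mul_h

end Relations

/-- `E`, `H`, `F` is a basis of a copy of `sl₂` in the Malcev algebra `(M, μ)` of the variety
`𝓗`, rescaled so that `EF = H`, acting without nonzero annihilator on `M`, and `e`, `h`, `f`
are the right multiplications by `E`, `H`, `F`. -/
structure Sl2Action (μ : M →ₗ[K] M →ₗ[K] M) (E H F : M) (e h f : Module.End K M) : Prop where
  two : (2 : K) ≠ 0
  three : (3 : K) ≠ 0
  malcev : IsMalcev μ
  varietyH : InVarietyH μ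
  mul_E : ∀ x, μ x E = e x
  mul_H : ∀ x, μ x H = h x
  mul_F : ∀ x, μ x F = f x
  e_H : e H = -E
  e_F : e F = -H
  h_F : h F = -F
  faithful : ∀ x, e x = 0 → h x = 0 → f x = 0 → x = 0

/-- The operator `m ↦ J(m, H, F)`, as a function of the right multiplications `h` and `f`. -/
def jacOp (h f : Module.End K M) : Module.End K M := h * f - f * h + f

/-- The kernel of the projection of `M` onto its non-Lie component. -/
def evenPart (e h f : Module.End K M) : Submodule K M :=
  LinearMap.ker (jacOp h f) ⊓ LinearMap.ker (jacOp h f * e)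

/-- The kernel of the projection of `M` onto its adjoint component. -/
def oddPart (e f : Module.End K M) : Submodule K M :=
  LinearMap.ker (e * e) ⊓ LinearMap.ker (e * e * f) ⊓ LinearMap.ker (e * e * f * f)

theorem mem_oddPart {e f : Module.End K M} {x : M} :
    x ∈ oddPart e f ↔ e (e x) = 0 ∧ e (e (f x)) = 0 ∧ e (e (f (f x))) = 0 := by
  simp [oddPart, and_assoc]

theorem mem_evenPart {e h f : Module.End K M} {x : M} :
    x ∈ evenPart e h f ↔ jacOp h f x = 0 ∧ jacOp h f (e x) = 0 := by
  simp [evenPart]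

theorem jacOp_apply (h f : Module.End K M) (x : M) : jacOp h f x = h (f x) - f (h x) + f x := rfl

/-- The component of `x` in `evenPart`. -/
def evenProj (e f : Module.End K M) (x : M) : M :=
  e (e (f (f x))) + f (e (e (f x))) + f (f (e (e x)))

/-- The operators `e`, `h`, `f` act on `x₀`, `x₁`, `x₂` as in the adjoint module of `sl₂`. -/
structure IsAdjointTriple (e h f : Module.End K M) (x₀ x₁ x₂ : M) : Prop where
  e₀ : e x₀ = 0
  h₀ : h x₀ = x₀
  f₀ : f x₀ = x₁
  e₁ : e x₁ = -x₀
  h₁ : h x₁ = 0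
  f₁ : f x₁ = x₂
  e₂ : e x₂ = -x₁
  h₂ : h x₂ = -x₂
  f₂ : f x₂ = 0

/-- The operators `e`, `h`, `f` act on `x`, `y` as in the non-Lie Malcev module of `sl₂`. -/
structure IsDoublet (e h f : Module.End K M) (x y : M) : Prop where
  e₀ : e x = y
  h₀ : h x = x
  f₀ : f x = 0
  e₁ : e y = 0
  h₁ : h y = -y
  f₁ : f y = -((2 : K) • x)

namespace Sl2Action

variable {μ : M →ₗ[K] M →ₗ[K] M} {E H F : M} {e h f : Module.End K M}

theorem anticomm (S : Sl2Action μ E H F e h f) (x y : M) : μ x y = -μ y x := by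
  have key := S.malcev.1 (x + y)
  simp only [map_add, LinearMap.add_apply, S.malcev.1, zero_add, add_zero] at key
  exact eq_neg_of_add_eq_zero_right key

theorem E_mul (S : Sl2Action μ E H F e h f) (x : M) : μ E x = -e x := by
  rw [S.anticomm, S.mul_E]

theorem H_mul (S : Sl2Action μ E H F e h f) (x : M) : μ H x = -h x := by
  rw [S.anticomm, S.mul_H]

theorem F_mul (S : Sl2Action μ E H F e h f) (x : M) : μ F x = -f x := by
  rw [S.anticomm, S.mul_F]

theorem e_E (S : Sl2Action μ E H F e h f) : e E = 0 := by
  rw [← S.mul_E, S.malcev.1]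

theorem h_H (S : Sl2Action μ E H F e h f) : h H = 0 := by
  rw [← S.mul_H, S.malcev.1]

theorem f_F (S : Sl2Action μ E H F e h f) : f F = 0 := by
  rw [← S.mul_F, S.malcev.1]

theorem h_E (S : Sl2Action μ E H F e h f) : h E = E := by
  rw [← S.mul_H, S.E_mul, S.e_H, neg_neg]

theorem f_E (S : Sl2Action μ E H F e h f) : f E = H := by
  rw [← S.mul_F, S.E_mul, S.e_F, neg_neg]

theorem f_H (S : Sl2Action μ E H F e h f) : f H = F := by
  rw [← S.mul_F, S.H_mul, S.h_F, neg_neg]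

theorem symm (S : Sl2Action μ E H F e h f) : Sl2Action μ F (-H) E f (-h) e where
  two := S.two
  three := S.three
  malcev := S.malcev
  varietyH := S.varietyH
  mul_E := S.mul_F
  mul_H x := by simp [S.mul_H]
  mul_F := S.mul_E
  e_H := by simp [S.f_H]
  e_F := by simp [S.f_E]
  h_F := by simp [S.h_E]
  faithful x hf hh he := S.faithful x he (by simpa using hh) hf

theorem six_ne_zero (S : Sl2Action μ E H F e h f) : (6 : K) ≠ 0 := by
  rw [show (6 : K) = 2 * 3 by norm_num]
  exact mul_ne_zero S.two S.three

theorem eq_of_six_smul (S : Sl2Action μ E H F e h f) {x y : M} (hxy : (6 : K) • x = (6 : K) • y) :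
    x = y :=
  smul_right_injective M S.six_ne_zero hxy

theorem relations (S : Sl2Action μ E H F e h f) : MalcevSl2Relations e h f := by
  constructor <;> ext m <;>
    simp only [Module.End.mul_apply, LinearMap.add_apply, Module.End.ofNat_apply,
      LinearMap.zero_apply]
  case' cube_e =>
    apply S.eq_of_six_smul
    have key := S.varietyH E H m E E
  case' cube_h =>
    apply S.eq_of_six_smul
    have key := S.varietyH E F m H H
  case' eeh => have key := S.malcev.2 m E E H
  case' ehe => have key := S.malcev.2 m E H E
  case' hee => have key := S.malcev.2 m H E E
  case' eef => have key := S.malcev.2 m E E F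
  case' efe => have key := S.malcev.2 m E F E
  case' fee => have key := S.malcev.2 m F E E
  case' ehh => have key := S.malcev.2 m E H H
  case' heh => have key := S.malcev.2 m H E H
  case' hhe => have key := S.malcev.2 m H H E
  case' ehf => have key := S.malcev.2 m E H F
  case' efh => have key := S.malcev.2 m E F H
  case' hef => have key := S.malcev.2 m H E F
  all_goals
    simp only [mh, mbr, S.mul_E, S.mul_H, S.mul_F, S.E_mul, S.H_mul, S.F_mul, S.e_E, S.e_H, S.e_F,
      S.h_E, S.h_H, S.h_F, S.f_E, S.f_H, map_neg, map_add, map_smul, map_zero, LinearMap.neg_apply,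
      LinearMap.zero_apply, LinearMap.add_apply, LinearMap.smul_apply, neg_zero, smul_zero,
      sub_zero, zero_sub, add_zero, neg_neg] at key
  case cube_e | cube_h => linear_combination (norm := module) (-1 : K) • key
  all_goals linear_combination (norm := module) (1 : K) • key

theorem toMalcevSl2 (S : Sl2Action μ E H F e h f) : MalcevSl2 e h f where
  pos := S.relations
  neg := S.symm.relations
  cancel_three a b hab := by
    ext m
    have key := LinearMap.congr_fun hab m
    simp only [Module.End.mul_apply, Module.End.ofNat_apply] at key
    apply S.eq_of_six_smul
    linear_combination (norm := module) (2 : K) • key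
  faithful a he hh hf := by
    ext m
    exact S.faithful _ (LinearMap.congr_fun he m) (LinearMap.congr_fun hh m)
      (LinearMap.congr_fun hf m)

theorem e_e_e (S : Sl2Action μ E H F e h f) (z : M) : e (e (e z)) = 0 :=
  LinearMap.congr_fun S.toMalcevSl2.pos.cube_e z

theorem f_f_f (S : Sl2Action μ E H F e h f) (z : M) : f (f (f z)) = 0 :=
  LinearMap.congr_fun S.toMalcevSl2.neg.cube_e z

theorem e_e_h (S : Sl2Action μ E H F e h f) (z : M) : e (e (h z)) = -e (e z) :=
  LinearMap.congr_fun S.toMalcevSl2.e_e_h z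

theorem e_e_f_e (S : Sl2Action μ E H F e h f) (z : M) : e (e (f (e z))) = -e (e z) :=
  LinearMap.congr_fun S.toMalcevSl2.e_e_f_e z

theorem e_e_f_h (S : Sl2Action μ E H F e h f) (z : M) : e (e (f (h z))) = 0 :=
  LinearMap.congr_fun S.toMalcevSl2.e_e_f_h z

theorem e_e_f_f_e (S : Sl2Action μ E H F e h f) (z : M) : e (e (f (f (e z)))) = -e (e (f z)) :=
  LinearMap.congr_fun S.toMalcevSl2.e_e_f_f_e z

theorem e_e_f_f_h (S : Sl2Action μ E H F e h f) (z : M) : e (e (f (f (h z)))) = e (e (f (f z))) :=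
  LinearMap.congr_fun S.toMalcevSl2.e_e_f_f_h z

theorem jacOp_h (S : Sl2Action μ E H F e h f) (z : M) : jacOp h f (h z) = -jacOp h f z :=
  LinearMap.congr_fun S.toMalcevSl2.jacF_mul_h z

theorem jacOp_f (S : Sl2Action μ E H F e h f) (z : M) : jacOp h f (f z) = 0 :=
  LinearMap.congr_fun S.toMalcevSl2.jacF_mul_f z

theorem jacOp_e_e (S : Sl2Action μ E H F e h f) (z : M) : jacOp h f (e (e z)) = 0 :=
  LinearMap.congr_fun S.toMalcevSl2.jacF_mul_e_e z

theorem jacOp_e_h (S : Sl2Action μ E H F e h f) (z : M) : jacOp h f (e (h z)) = jacOp h f (e z) :=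
  LinearMap.congr_fun S.toMalcevSl2.jacF_mul_e_h z

theorem jacOp_e_f (S : Sl2Action μ E H F e h f) (z : M) :
    jacOp h f (e (f z)) = -((2 : K) • jacOp h f z) :=
  (LinearMap.congr_fun S.toMalcevSl2.jacF_mul_e_f z).trans (by
    simp [jacOp, two_smul, two_mul]
    abel)

theorem h_jacOp (S : Sl2Action μ E H F e h f) (z : M) : h (jacOp h f z) = jacOp h f z :=
  LinearMap.congr_fun S.toMalcevSl2.h_mul_jacF z

theorem f_jacOp (S : Sl2Action μ E H F e h f) (z : M) : f (jacOp h f z) = 0 :=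
  LinearMap.congr_fun S.toMalcevSl2.f_mul_jacF z

theorem e_e_jacOp (S : Sl2Action μ E H F e h f) (z : M) : e (e (jacOp h f z)) = 0 :=
  LinearMap.congr_fun S.toMalcevSl2.e_e_mul_jacF z

theorem eq_zero_of_two_smul (S : Sl2Action μ E H F e h f) {x : M} (hx : (2 : K) • x = 0) :
    x = 0 :=
  (smul_eq_zero.1 hx).resolve_left S.two

theorem jac_E_eq_zero (S : Sl2Action μ E H F e h f) {x : M} (hx : x ∈ evenPart e h f) :
    h (e x) - e (h x) - e x = 0 := by
  apply S.eq_zero_of_two_smul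
  have key := LinearMap.congr_fun S.toMalcevSl2.two_jacE x
  have key' : e (jacOp h f (e x)) = 0 := by rw [(mem_evenPart.1 hx).2, map_zero]
  simp only [jacOp_apply, map_sub, map_add] at key'
  simp only [Module.End.mul_apply, Module.End.ofNat_apply, LinearMap.sub_apply, LinearMap.add_apply,
    map_sub, map_add] at key
  linear_combination (norm := module) (1 : K) • key + (1 : K) • key'

theorem jac_H_eq_zero (S : Sl2Action μ E H F e h f) {x : M} (hx : x ∈ evenPart e h f) :
    f (e x) - e (f x) - h x = 0 := by
  apply S.eq_zero_of_two_smul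
  have key := LinearMap.congr_fun S.toMalcevSl2.two_jacH x
  have key₁ := (mem_evenPart.1 hx).2
  have key₂ : e (jacOp h f x) = 0 := by rw [(mem_evenPart.1 hx).1, map_zero]
  simp only [jacOp_apply, map_sub, map_add] at key₁ key₂
  simp only [Module.End.mul_apply, Module.End.ofNat_apply, LinearMap.sub_apply, LinearMap.add_apply,
    map_sub, map_add] at key
  linear_combination (norm := module) (1 : K) • key + (1 : K) • key₁ - (1 : K) • key₂

theorem jac_F_eq_zero {x : M} (hx : x ∈ evenPart e h f) : h (f x) - f (h x) + f x = 0 :=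
  (mem_evenPart.1 hx).1

theorem br_E_eq_zero (S : Sl2Action μ E H F e h f) {x : M} (hx : x ∈ oddPart e f) :
    h (e x) - e (h x) + (2 : K) • e x = 0 := by
  obtain ⟨h₁, h₂, h₃⟩ := mem_oddPart.1 hx
  have key := LinearMap.congr_fun S.toMalcevSl2.brE x
  simp only [mul_assoc, Module.End.mul_apply, Module.End.ofNat_apply, LinearMap.sub_apply,
    LinearMap.add_apply, LinearMap.neg_apply, h₁, h₂, map_zero] at key
  linear_combination (norm := module) (1 : K) • key

theorem br_H_eq_zero (S : Sl2Action μ E H F e h f) {x : M} (hx : x ∈ oddPart e f) :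
    f (e x) - e (f x) + (2 : K) • h x = 0 := by
  obtain ⟨h₁, h₂, h₃⟩ := mem_oddPart.1 hx
  have key := LinearMap.congr_fun S.toMalcevSl2.brH x
  simp only [mul_assoc, Module.End.mul_apply, Module.End.ofNat_apply, LinearMap.sub_apply,
    LinearMap.add_apply, h₁, h₃, map_zero] at key
  linear_combination (norm := module) (1 : K) • key

theorem br_F_eq_zero (S : Sl2Action μ E H F e h f) {x : M} (hx : x ∈ oddPart e f) :
    h (f x) - f (h x) - (2 : K) • f x = 0 := by
  obtain ⟨h₁, h₂, h₃⟩ := mem_oddPart.1 hx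
  have key := LinearMap.congr_fun S.toMalcevSl2.brF x
  simp only [mul_assoc, Module.End.mul_apply, Module.End.ofNat_apply, LinearMap.sub_apply,
    LinearMap.neg_apply, h₂, h₃, map_zero] at key
  linear_combination (norm := module) (1 : K) • key

theorem disjoint (S : Sl2Action μ E H F e h f) {x : M} (hN : x ∈ evenPart e h f)
    (hJ : x ∈ oddPart e f) : x = 0 := by
  have h₁ := S.jac_E_eq_zero hN
  have h₂ := S.jac_H_eq_zero hN
  have h₃ := jac_F_eq_zero hN
  have h₄ := S.br_E_eq_zero hJ
  have h₅ := S.br_H_eq_zero hJ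
  have h₆ := S.br_F_eq_zero hJ
  apply S.faithful <;> apply S.eq_of_six_smul
  · linear_combination (norm := module) (2 : K) • h₄ - (2 : K) • h₁
  · linear_combination (norm := module) (2 : K) • h₅ - (2 : K) • h₂
  · linear_combination (norm := module) (2 : K) • h₃ - (2 : K) • h₆

theorem evenProj_mem (S : Sl2Action μ E H F e h f) (x : M) : evenProj e f x ∈ evenPart e h f := by
  simp only [mem_evenPart, evenProj, map_add, S.jacOp_e_e, S.jacOp_f, S.jacOp_e_f, smul_zero,
    neg_zero, add_zero, and_self]

theorem sub_evenProj_mem (S : Sl2Action μ E H F e h f) (x : M) :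
    x - evenProj e f x ∈ oddPart e f := by
  simp only [mem_oddPart, evenProj, map_add, map_sub, S.e_e_e, S.f_f_f, S.e_e_f_e, S.e_e_f_f_e,
    neg_neg, neg_zero, zero_add, add_zero, sub_self, and_self]

theorem evenProj_eq_self (S : Sl2Action μ E H F e h f) {x : M} (hx : x ∈ evenPart e h f) :
    evenProj e f x = x :=
  (sub_eq_zero.1 (S.disjoint (sub_mem hx (S.evenProj_mem x)) (S.sub_evenProj_mem x))).symm

theorem isAdjointTriple (S : Sl2Action μ E H F e h f) (x : M) :
    IsAdjointTriple e h f (e (e x)) (f (e (e x))) (f (f (e (e x)))) := by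
  have m₀ : e (e x) ∈ evenPart e h f := by simp [mem_evenPart, S.jacOp_e_e]
  have m₁ : f (e (e x)) ∈ evenPart e h f := by
    simp [mem_evenPart, S.jacOp_f, S.jacOp_e_f, S.jacOp_e_e]
  have e₀ : e (e (e x)) = 0 := S.e_e_e x
  have h₀ : h (e (e x)) = e (e x) := LinearMap.congr_fun S.toMalcevSl2.h_e_e x
  have f₂ : f (f (f (e (e x)))) = 0 := S.f_f_f _
  have h₁ := jac_F_eq_zero m₀
  have h₂ := jac_F_eq_zero m₁
  have e₁ := S.jac_H_eq_zero m₀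
  have e₂ := S.jac_H_eq_zero m₁
  rw [h₀] at h₁ e₁
  rw [e₀, map_zero] at e₁
  have h₁' : h (f (e (e x))) = 0 := by linear_combination (norm := module) h₁
  have e₁' : e (f (e (e x))) = -e (e x) := by linear_combination (norm := module) -e₁
  rw [h₁', map_zero] at h₂
  rw [h₁', e₁', map_neg] at e₂
  exact ⟨e₀, h₀, rfl, e₁', h₁', rfl, by linear_combination (norm := module) -e₂,
    by linear_combination (norm := module) h₂, f₂⟩

theorem jacOp_mem_oddPart (S : Sl2Action μ E H F e h f) (x : M) : jacOp h f x ∈ oddPart e f := by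
  simp only [mem_oddPart, S.e_e_jacOp, S.f_jacOp, map_zero, and_self]

theorem isDoublet (S : Sl2Action μ E H F e h f) (x : M) :
    IsDoublet e h f (jacOp h f x) (e (jacOp h f x)) := by
  have key₁ := S.br_E_eq_zero (S.jacOp_mem_oddPart x)
  have key₂ := S.br_H_eq_zero (S.jacOp_mem_oddPart x)
  rw [S.h_jacOp] at key₁ key₂
  rw [S.f_jacOp, map_zero] at key₂
  exact ⟨rfl, S.h_jacOp x, S.f_jacOp x, S.e_e_jacOp x,
    by linear_combination (norm := module) key₁, by linear_combination (norm := module) key₂⟩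

theorem six_smul_eq (S : Sl2Action μ E H F e h f) {x : M} (hx : x ∈ oddPart e f) :
    (6 : K) • x = -(jacOp h f (e x) + e (jacOp h f x)) := by
  have key (y : M) : jacOp h f (e (jacOp h f y)) = -((6 : K) • jacOp h f y) := by
    have D := S.isDoublet y
    rw [jacOp_apply h f (e _), D.f₁, D.h₁, map_neg, map_neg, map_smul, D.h₀, D.f₁]
    module
  rw [← sub_eq_zero, sub_neg_eq_add]
  refine S.disjoint (mem_evenPart.2 ⟨?_, ?_⟩) (add_mem (Submodule.smul_mem _ _ hx)
    (add_mem (S.jacOp_mem_oddPart _) ?_))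
  · have : jacOp h f (jacOp h f (e x)) = 0 := by
      rw [jacOp_apply, S.f_jacOp, S.h_jacOp, S.f_jacOp, map_zero, sub_zero, add_zero]
    rw [map_add, map_add, map_smul, key, this]
    module
  · rw [map_add, map_add, map_add, map_add, map_smul, map_smul, key, S.jacOp_e_e]
    module
  · simp only [mem_oddPart, S.e_e_f_e, S.e_e_f_f_e, S.e_e_jacOp, S.f_jacOp, map_zero,
      neg_zero, and_self]

theorem evenPart_le (S : Sl2Action μ E H F e h f) {P : Submodule K M}
    (hP : ∀ x₀ x₁ x₂, IsAdjointTriple e h f x₀ x₁ x₂ → x₀ ∈ P ∧ x₁ ∈ P ∧ x₂ ∈ P) :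
    evenPart e h f ≤ P := by
  intro x hx
  rw [← S.evenProj_eq_self hx]
  exact add_mem (add_mem (hP _ _ _ (S.isAdjointTriple _)).1 (hP _ _ _ (S.isAdjointTriple _)).2.1)
    (hP _ _ _ (S.isAdjointTriple _)).2.2

theorem oddPart_le (S : Sl2Action μ E H F e h f) {P : Submodule K M}
    (hP : ∀ x y, IsDoublet e h f x y → x ∈ P ∧ y ∈ P) : oddPart e f ≤ P := by
  intro x hx
  refine (Submodule.smul_mem_iff P S.six_ne_zero).1 ?_
  rw [S.six_smul_eq hx]
  exact neg_mem (add_mem (hP _ _ (S.isDoublet _)).1 (hP _ _ (S.isDoublet _)).2)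

theorem mul_adjointTriple_adjointTriple (S : Sl2Action μ E H F e h f) {x₀ x₁ x₂ y₀ y₁ y₂ : M}
    (X : IsAdjointTriple e h f x₀ x₁ x₂) (Y : IsAdjointTriple e h f y₀ y₁ y₂) :
    μ x₀ y₀ ∈ evenPart e h f ∧ μ x₀ y₁ ∈ evenPart e h f ∧ μ x₀ y₂ ∈ evenPart e h f ∧
    μ x₁ y₀ ∈ evenPart e h f ∧ μ x₁ y₁ ∈ evenPart e h f ∧ μ x₁ y₂ ∈ evenPart e h f ∧
    μ x₂ y₀ ∈ evenPart e h f ∧ μ x₂ y₁ ∈ evenPart e h f ∧ μ x₂ y₂ ∈ evenPart e h f := by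
  have P00 := congrArg (jacOp h f) (S.malcev.2 x₀ y₀ E H)
  have P01 := congrArg (fun m => jacOp h f (e m)) (S.malcev.2 x₀ y₁ E F)
  have P02 := congrArg (fun m => jacOp h f (e m)) (S.malcev.2 x₀ H y₁ F)
  have P10 := congrArg (fun m => jacOp h f (e m)) (S.malcev.2 x₁ E F y₀)
  have P11 := congrArg (jacOp h f) (S.malcev.2 x₀ y₁ E F)
  have P12 := congrArg (jacOp h f) (S.malcev.2 x₀ y₂ E F)
  have P20 := congrArg (fun m => jacOp h f (e m)) (S.malcev.2 x₁ F y₀ H)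
  have P21 := congrArg (fun m => jacOp h f (e m)) (S.malcev.2 x₁ E F y₂)
  have P22 := congrArg (fun m => jacOp h f (e m)) (S.malcev.2 x₀ F F y₂)
  have Q00 := congrArg (fun m => jacOp h f (e m)) (S.malcev.2 x₀ F y₁ E)
  have Q01 := congrArg (jacOp h f) (S.malcev.2 x₀ y₀ H F)
  have Q02 := congrArg (jacOp h f) (S.malcev.2 x₀ y₁ H F)
  have Q10 := congrArg (jacOp h f) (S.malcev.2 x₀ F y₀ H)
  have Q11 := congrArg (jacOp h f) (S.malcev.2 x₀ H F y₁)
  have Q12 := congrArg (jacOp h f) (S.malcev.2 x₀ y₁ F F)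
  have Q20 := congrArg (jacOp h f) (S.malcev.2 x₁ F y₀ H)
  have Q21 := congrArg (jacOp h f) (S.malcev.2 x₀ F y₁ F)
  have Q22 := congrArg (jacOp h f) (S.malcev.2 x₀ F y₂ F)
  simp only [S.mul_E, S.mul_H, S.mul_F, S.E_mul, S.H_mul, S.F_mul, S.e_F, S.h_F, S.h_E, S.f_E,
    S.f_H, S.f_F, X.e₀, X.h₀, X.f₀, X.e₁, X.h₁, X.f₁, Y.e₀, Y.h₀, Y.f₀, Y.e₁, Y.h₁, Y.f₁, Y.e₂,
    Y.h₂, Y.f₂, S.anticomm y₀ x₀, S.anticomm y₁ x₀, S.anticomm y₂ x₀, S.anticomm y₀ x₁,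
    S.anticomm y₁ x₁, S.anticomm y₂ x₁, S.jacOp_h, S.jacOp_f, S.jacOp_e_e, S.jacOp_e_h, S.jacOp_e_f,
    map_add, map_neg, map_zero, LinearMap.neg_apply, LinearMap.zero_apply, neg_neg, neg_zero,
    smul_zero] at P00 P01 P02 P10 P11 P12 P20 P21 P22 Q00 Q01 Q02 Q10 Q11 Q12 Q20 Q21 Q22
  simp only [mem_evenPart]
  refine ⟨⟨?_, ?_⟩, ⟨?_, ?_⟩, ⟨?_, ?_⟩, ⟨?_, ?_⟩, ⟨?_, ?_⟩, ⟨?_, ?_⟩, ⟨?_, ?_⟩, ⟨?_, ?_⟩,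
    ⟨?_, ?_⟩⟩ <;>
    apply S.eq_zero_of_two_smul
  · linear_combination (norm := module) (1 : K) • Q00
  · linear_combination (norm := module) (1 : K) • P00
  · linear_combination (norm := module) (1 : K) • Q01
  · linear_combination (norm := module) (1 : K) • P01
  · linear_combination (norm := module) (2 : K) • Q02
  · linear_combination (norm := module) (2 : K) • P02
  · linear_combination (norm := module) (1 : K) • Q10
  · linear_combination (norm := module) (-1 : K) • P10
  · linear_combination (norm := module) (-2 : K) • Q11
  · linear_combination (norm := module) (2 : K) • P11
  · linear_combination (norm := module) (2 : K) • Q12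
  · linear_combination (norm := module) (2 : K) • P12
  · linear_combination (norm := module) (2 : K) • Q20
  · linear_combination (norm := module) (-2 : K) • P20
  · linear_combination (norm := module) (2 : K) • Q21
  · linear_combination (norm := module) (2 : K) • P21
  · linear_combination (norm := module) (2 : K) • Q22
  · linear_combination (norm := module) (-2 : K) • P22

theorem mul_adjointTriple_doublet (S : Sl2Action μ E H F e h f) {x₀ x₁ x₂ z w : M}
    (X : IsAdjointTriple e h f x₀ x₁ x₂) (Y : IsDoublet e h f z w) :
    μ x₀ z ∈ oddPart e f ∧ μ x₀ w ∈ oddPart e f ∧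
    μ x₁ z ∈ oddPart e f ∧ μ x₁ w ∈ oddPart e f ∧
    μ x₂ z ∈ oddPart e f ∧ μ x₂ w ∈ oddPart e f := by
  have a00 := congrArg (fun m => e (e (f (f m)))) (S.malcev.2 x₀ E z F)
  have a01 := congrArg (fun m => e (e (f (f m)))) (S.malcev.2 x₀ z E H)
  have a10 := congrArg (fun m => e (e (f (f m)))) (S.malcev.2 x₀ z H F)
  have a11 := congrArg (fun m => e (e (f (f m)))) (S.malcev.2 x₀ z F E)
  have a20 := congrArg (fun m => e (e (f (f m)))) (S.malcev.2 x₀ F z F)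
  have a21 := congrArg (fun m => e (e (f (f m)))) (S.malcev.2 x₀ F w F)
  have b00 := congrArg (fun m => e (e (f (f m)))) (S.malcev.2 x₀ H z E)
  have b01 := congrArg (fun m => e (e (f (f m)))) (S.malcev.2 x₀ E z E)
  have b10 := congrArg (fun m => e (e (f m))) (S.malcev.2 x₀ F z H)
  have b11 := congrArg (fun m => e (e (f m))) (S.malcev.2 x₀ z F E)
  have b20 := congrArg (fun m => e (e (f m))) (S.malcev.2 x₀ F F z)
  have b21 := congrArg (fun m => e (e (f (f m)))) (S.malcev.2 x₁ F w E)
  have c00 := congrArg (fun m => e (e (f (f m)))) (S.malcev.2 x₀ z E E)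
  have c01 := congrArg (fun m => e (e (f m))) (S.malcev.2 x₀ E z E)
  have c10 := congrArg (fun m => e (e (f m))) (S.malcev.2 x₀ z E F)
  have c11 := congrArg (fun m => e (e (f (f m)))) (S.malcev.2 x₁ E E w)
  have c20 := congrArg (fun m => e (e m)) (S.malcev.2 x₁ F z H)
  have c21 := congrArg (fun m => e (e m)) (S.malcev.2 x₁ H F w)
  simp only [S.mul_E, S.mul_H, S.mul_F, S.E_mul, S.H_mul, S.F_mul, S.e_H, S.e_F, S.h_F, S.h_E,
    S.f_E, S.f_H, S.e_E, S.f_F, X.e₀, X.h₀, X.f₀, X.e₁, X.h₁, X.f₁, Y.e₀, Y.h₀, Y.f₀, Y.e₁, Y.h₁,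
    Y.f₁, S.anticomm z x₀, S.anticomm w x₀, S.anticomm z x₁, S.anticomm w x₁, S.f_f_f, S.e_e_h,
    S.e_e_f_e, S.e_e_f_h, S.e_e_f_f_e, S.e_e_f_f_h, map_add, map_neg, map_smul, map_zero,
    LinearMap.neg_apply, LinearMap.zero_apply, LinearMap.smul_apply, neg_neg, neg_zero, smul_zero]
    at a00 a01 a10 a11 a20 a21 b00 b01 b10 b11 b20 b21 c00 c01 c10 c11 c20 c21
  simp only [mem_oddPart]
  refine ⟨⟨?_, ?_, ?_⟩, ⟨?_, ?_, ?_⟩, ⟨?_, ?_, ?_⟩, ⟨?_, ?_, ?_⟩, ⟨?_, ?_, ?_⟩, ⟨?_, ?_, ?_⟩⟩ <;>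
    apply S.eq_zero_of_two_smul
  · linear_combination (norm := module) (-2 : K) • c00
  · linear_combination (norm := module) (1 : K) • b00
  · linear_combination (norm := module) (1 : K) • a00
  · linear_combination (norm := module) (-2 : K) • c01
  · linear_combination (norm := module) (-2 : K) • b01
  · linear_combination (norm := module) (-2 : K) • a01
  · linear_combination (norm := module) (-2 : K) • c10
  · linear_combination (norm := module) (2 : K) • b10
  · linear_combination (norm := module) (1 : K) • a10
  · linear_combination (norm := module) (2 : K) • c11
  · linear_combination (norm := module) (2 : K) • b11
  · linear_combination (norm := module) (2 : K) • a11
  · linear_combination (norm := module) (2 : K) • c20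
  · linear_combination (norm := module) (-2 : K) • b20
  · linear_combination (norm := module) (2 : K) • a20
  · linear_combination (norm := module) (2 : K) • c21
  · linear_combination (norm := module) (2 : K) • b21
  · linear_combination (norm := module) (2 : K) • a21

theorem mul_doublet_doublet (S : Sl2Action μ E H F e h f) {x y z w : M}
    (X : IsDoublet e h f x y) (Y : IsDoublet e h f z w) :
    μ x z ∈ evenPart e h f ∧ μ x w ∈ evenPart e h f ∧
    μ y z ∈ evenPart e h f ∧ μ y w ∈ evenPart e h f := by
  have P00 := congrArg (fun m => jacOp h f (e m)) (S.malcev.2 x z E F)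
  have P01 := congrArg (fun m => jacOp h f (e m)) (S.malcev.2 x z H E)
  have P10 := congrArg (fun m => jacOp h f (e m)) (S.malcev.2 x H z E)
  have P11 := congrArg (fun m => jacOp h f (e m)) (S.malcev.2 x z E E)
  have Q00 := congrArg (jacOp h f) (S.malcev.2 x z E F)
  have Q01 := congrArg (jacOp h f) (S.malcev.2 x w F E)
  have Q10 := congrArg (jacOp h f) (S.malcev.2 y E z F)
  have Q11 := congrArg (jacOp h f) (S.malcev.2 x E w H)
  simp only [S.mul_E, S.mul_H, S.mul_F, S.E_mul, S.H_mul, S.F_mul, S.e_H, S.e_F, S.h_E, S.f_E,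
    S.e_E, X.e₀, X.h₀, X.f₀, X.e₁, X.h₁, X.f₁, Y.e₀, Y.h₀, Y.f₀, Y.e₁, Y.h₁, Y.f₁, S.anticomm z x,
    S.anticomm w x, S.anticomm z y, S.jacOp_h, S.jacOp_f, S.jacOp_e_e, S.jacOp_e_h, S.jacOp_e_f,
    map_add, map_neg, map_smul, map_zero, LinearMap.neg_apply, LinearMap.zero_apply,
    LinearMap.smul_apply, neg_neg, neg_zero] at P00 P01 P10 P11 Q00 Q01 Q10 Q11
  simp only [mem_evenPart]
  refine ⟨⟨?_, ?_⟩, ⟨?_, ?_⟩, ⟨?_, ?_⟩, ⟨?_, ?_⟩⟩ <;>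
    apply S.eq_zero_of_two_smul
  · linear_combination (norm := module) (-2 : K) • Q00
  · linear_combination (norm := module) (2 : K) • P00
  · linear_combination (norm := module) (-2 : K) • Q01
  · linear_combination (norm := module) (1 : K) • P01
  · linear_combination (norm := module) (-2 : K) • Q10
  · linear_combination (norm := module) (-2 : K) • P10
  · linear_combination (norm := module) (1 : K) • Q11
  · linear_combination (norm := module) (2 : K) • P11

theorem mul_even_even (S : Sl2Action μ E H F e h f) {x y : M} (hx : x ∈ evenPart e h f)
    (hy : y ∈ evenPart e h f) : μ x y ∈ evenPart e h f := by
  refine S.evenPart_le (P := (evenPart e h f).comap (μ.flip y)) (fun x₀ x₁ x₂ X => ?_) hx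
  suffices h : evenPart e h f ≤ (evenPart e h f).comap (μ x₀) ⊓ (evenPart e h f).comap (μ x₁) ⊓
      (evenPart e h f).comap (μ x₂) from ⟨(h hy).1.1, (h hy).1.2, (h hy).2⟩
  refine S.evenPart_le fun y₀ y₁ y₂ Y => ?_
  obtain ⟨h₀₀, h₀₁, h₀₂, h₁₀, h₁₁, h₁₂, h₂₀, h₂₁, h₂₂⟩ := S.mul_adjointTriple_adjointTriple X Y
  exact ⟨⟨⟨h₀₀, h₁₀⟩, h₂₀⟩, ⟨⟨h₀₁, h₁₁⟩, h₂₁⟩, ⟨⟨h₀₂, h₁₂⟩, h₂₂⟩⟩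

theorem mul_even_odd (S : Sl2Action μ E H F e h f) {x y : M} (hx : x ∈ evenPart e h f)
    (hy : y ∈ oddPart e f) : μ x y ∈ oddPart e f := by
  refine S.evenPart_le (P := (oddPart e f).comap (μ.flip y)) (fun x₀ x₁ x₂ X => ?_) hx
  suffices h : oddPart e f ≤ (oddPart e f).comap (μ x₀) ⊓ (oddPart e f).comap (μ x₁) ⊓
      (oddPart e f).comap (μ x₂) from ⟨(h hy).1.1, (h hy).1.2, (h hy).2⟩
  refine S.oddPart_le fun z w Y => ?_
  obtain ⟨h₀₀, h₀₁, h₁₀, h₁₁, h₂₀, h₂₁⟩ := S.mul_adjointTriple_doublet X Y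
  exact ⟨⟨⟨h₀₀, h₁₀⟩, h₂₀⟩, ⟨⟨h₀₁, h₁₁⟩, h₂₁⟩⟩

theorem mul_odd_odd (S : Sl2Action μ E H F e h f) {x y : M} (hx : x ∈ oddPart e f)
    (hy : y ∈ oddPart e f) : μ x y ∈ evenPart e h f := by
  refine S.oddPart_le (P := (evenPart e h f).comap (μ.flip y)) (fun x₀ x₁ X => ?_) hx
  suffices h : oddPart e f ≤ (evenPart e h f).comap (μ x₀) ⊓ (evenPart e h f).comap (μ x₁) from
    ⟨(h hy).1, (h hy).2⟩
  refine S.oddPart_le fun z w Y => ?_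
  obtain ⟨h₀₀, h₀₁, h₁₀, h₁₁⟩ := S.mul_doublet_doublet X Y
  exact ⟨⟨h₀₀, h₁₀⟩, ⟨h₀₁, h₁₁⟩⟩

theorem NMker_eq (S : Sl2Action μ E H F e h f) :
    NMker μ (Submodule.span K {E, H, F}) = evenPart e h f := by
  apply le_antisymm
  · intro x hx
    simp only [NMker, Submodule.mem_iInf, LinearMap.mem_ker] at hx
    have hE : E ∈ Submodule.span K {E, H, F} := Submodule.subset_span (by simp)
    have hH : H ∈ Submodule.span K {E, H, F} := Submodule.subset_span (by simp)
    have hF : F ∈ Submodule.span K {E, H, F} := Submodule.subset_span (by simp)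
    have h₁ := hx H hH F hF
    have h₂ := hx E hE F hF
    have h₃ := LinearMap.congr_fun S.toMalcevSl2.jacF_mul_e x
    simp only [jop, LinearMap.add_apply, LinearMap.comp_apply, LinearMap.flip_apply, S.mul_E,
      S.mul_H, S.mul_F, S.H_mul, S.F_mul, S.f_E, S.f_H, map_neg] at h₁ h₂
    have h₄ : f (e x) - e (f x) - h x = 0 := by linear_combination (norm := module) h₂
    simp only [Module.End.mul_apply, LinearMap.add_apply, LinearMap.sub_apply, h₄, map_zero,
      add_zero] at h₃
    exact mem_evenPart.2 ⟨by rw [jacOp_apply]; linear_combination (norm := module) -h₁, h₃⟩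
  · intro x hx
    simp only [NMker, Submodule.mem_iInf, LinearMap.mem_ker, Submodule.mem_span_triple]
    rintro _ ⟨a₁, a₂, a₃, rfl⟩ _ ⟨b₁, b₂, b₃, rfl⟩
    simp only [jop, LinearMap.add_apply, LinearMap.comp_apply, LinearMap.flip_apply, map_add,
      map_smul, LinearMap.smul_apply, S.mul_E, S.mul_H, S.mul_F, S.E_mul, S.H_mul, S.F_mul, S.e_E,
      S.e_H, S.e_F, S.h_E, S.h_H, S.h_F, S.f_E, S.f_H, S.f_F, map_neg, map_zero,
      LinearMap.neg_apply, LinearMap.zero_apply]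
    linear_combination (norm := module) (a₁ * b₂ - a₂ * b₁) • S.jac_E_eq_zero hx +
      (a₁ * b₃ - a₃ * b₁) • S.jac_H_eq_zero hx - (a₂ * b₃ - a₃ * b₂) • jac_F_eq_zero hx

theorem JMker_eq (S : Sl2Action μ E H F e h f) :
    JMker μ (Submodule.span K {E, H, F}) = oddPart e f := by
  apply le_antisymm
  · intro x hx
    simp only [JMker, Submodule.mem_iInf, LinearMap.mem_ker] at hx
    have hE : E ∈ Submodule.span K {E, H, F} := Submodule.subset_span (by simp)
    have hH : H ∈ Submodule.span K {E, H, F} := Submodule.subset_span (by simp)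
    have hF : F ∈ Submodule.span K {E, H, F} := Submodule.subset_span (by simp)
    have h₁ := congrArg e (hx E hE H hH)
    have h₂ := congrArg (fun z => e (e z)) (hx H hH F hF)
    have h₃ := congrArg (fun z => e (e (f z))) (hx H hH F hF)
    have h₄ : e (h (e x)) = 0 := LinearMap.congr_fun S.toMalcevSl2.e_h_e x
    simp only [bop, LinearMap.add_apply, LinearMap.sub_apply, LinearMap.smul_apply,
      LinearMap.comp_apply, LinearMap.flip_apply, S.mul_E, S.mul_H, S.mul_F, S.h_E, S.f_H, map_add,
      map_sub, map_smul, map_zero, h₄, S.e_e_h, S.e_e_f_h, S.e_e_f_f_h] at h₁ h₂ h₃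
    refine mem_oddPart.2 ⟨?_, ?_, ?_⟩ <;> apply S.eq_of_six_smul
    · linear_combination (norm := module) (2 : K) • h₁
    · linear_combination (norm := module) (2 : K) • h₂
    · linear_combination (norm := module) (2 : K) • h₃
  · intro x hx
    simp only [JMker, Submodule.mem_iInf, LinearMap.mem_ker, Submodule.mem_span_triple]
    rintro _ ⟨a₁, a₂, a₃, rfl⟩ _ ⟨b₁, b₂, b₃, rfl⟩
    simp only [bop, LinearMap.add_apply, LinearMap.sub_apply, LinearMap.smul_apply,
      LinearMap.comp_apply, LinearMap.flip_apply, map_add, map_smul, S.mul_E, S.mul_H, S.mul_F,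
      S.e_E, S.e_H, S.e_F, S.h_E, S.h_H, S.h_F, S.f_E, S.f_H, S.f_F, map_neg, map_zero,
      LinearMap.neg_apply, LinearMap.zero_apply]
    linear_combination (norm := module) (a₁ * b₂ - a₂ * b₁) • S.br_E_eq_zero hx +
      (a₁ * b₃ - a₃ * b₁) • S.br_H_eq_zero hx - (a₂ * b₃ - a₃ * b₂) • S.br_F_eq_zero hx

end Sl2Action

/-- `M = N_M ⊕ J_M` is a ℤ/2-grading of the algebra `M`. -/
theorem stmt6
    (h2 : (2 : K) ≠ 0) (h3 : (3 : K) ≠ 0)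
    (μ : M →ₗ[K] M →ₗ[K] M) (hMal : IsMalcev μ) (hVarH : InVarietyH μ)
    (E H F : M) (hind : LinearIndependent K ![E, H, F])
    (hEH : μ E H = E) (hFH : μ F H = -F) (hEF : μ E F = (2⁻¹ : K) • H)
    (L : Submodule K M) (hL : L = Submodule.span K {E, H, F})
    (hfaith : ∀ m : M, m ≠ 0 → ∃ a ∈ L, μ m a ≠ 0) :
    NMker μ L ⊓ JMker μ L = ⊥ ∧
    NMker μ L ⊔ JMker μ L = ⊤ ∧
    (∀ x ∈ NMker μ L, ∀ y ∈ NMker μ L, μ x y ∈ NMker μ L) ∧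
    (∀ x ∈ NMker μ L, ∀ y ∈ JMker μ L, μ x y ∈ JMker μ L) ∧
    (∀ x ∈ JMker μ L, ∀ y ∈ NMker μ L, μ x y ∈ JMker μ L) ∧
    (∀ x ∈ JMker μ L, ∀ y ∈ JMker μ L, μ x y ∈ NMker μ L) := by
  have hspan : L = Submodule.span K {(2 : K) • E, H, F} := by
    rw [hL, Submodule.span_insert, Submodule.span_insert ((2 : K) • E),
      Submodule.span_singleton_smul_eq (IsUnit.mk0 _ h2)]
  have anti : ∀ x y, μ x y = -μ y x := fun x y => by
    have key := hMal.1 (x + y)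
    simp only [map_add, LinearMap.add_apply, hMal.1, zero_add, add_zero] at key
    exact eq_neg_of_add_eq_zero_right key
  have S : Sl2Action μ ((2 : K) • E) H F (μ.flip ((2 : K) • E)) (μ.flip H) (μ.flip F) :=
    { two := h2
      three := h3
      malcev := hMal
      varietyH := hVarH
      mul_E := fun _ => rfl
      mul_H := fun _ => rfl
      mul_F := fun _ => rfl
      e_H := by rw [LinearMap.flip_apply, map_smul, anti, hEH, smul_neg]
      e_F := by
        rw [LinearMap.flip_apply, map_smul, anti, hEF, smul_neg, smul_smul, mul_inv_cancel₀ h2,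
          one_smul]
      h_F := hFH
      faithful := fun x he hh hf => by
        by_contra hx
        obtain ⟨a, ha, hxa⟩ := hfaith x hx
        refine hxa ?_
        rw [hspan] at ha
        exact (Submodule.span_le (p := LinearMap.ker (μ x))).2
          (by rintro _ (rfl | rfl | rfl); exacts [he, hh, hf]) ha }
  rw [hspan, S.NMker_eq, S.JMker_eq]
  refine ⟨?_, ?_, fun x hx y hy => S.mul_even_even hx hy, fun x hx y hy => S.mul_even_odd hx hy,
    fun x hx y hy => ?_, fun x hx y hy => S.mul_odd_odd hx hy⟩
  · exact (Submodule.eq_bot_iff _).2 fun x hx => S.disjoint hx.1 hx.2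
  · refine eq_top_iff.2 fun x _ => ?_
    rw [← add_sub_cancel (evenProj (μ.flip ((2 : K) • E)) (μ.flip F) x) x]
    exact Submodule.add_mem_sup (S.evenProj_mem x) (S.sub_evenProj_mem x)
  · rw [anti]
    exact neg_mem (S.mul_even_odd hy hx)

end
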